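/- arXiv:2402.10962 — 2 statements merged into one kernel-verified Lean document; each statement's English description precedes it below -/
import Mathlib

section
/- Let 2 ≤ d ≤ D with D ≥ 3, and let C ⊆ ℝ^D be a d-dimensional convex cone containing a d-dimensional spherical cone P^d[c, ψ] for some unit vector c and ψ ∈ (0, π/2). Let ε ∈ (0,1), set θ := arcsin ε, and assume 2θ ≤ ψ. Then the spherical measure of the ε-approximate cone satisfies μ(C^ε) ≥ (Γ(D/2)/(√π · Γ((D−1)/2))) · (∫₀^ψ sin^{d−2}x dx / ∫₀^{2θ} sin^{d−2}x dx) · ∫₀^θ sin^{D−2}x dx, where Γ is the Gamma function. -/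
open RealInnerProductSpace MeasureTheory

noncomputable section

/-- The `ε`-approximate cone of a convex cone `C`:
`C^ε = {w : w = u + v, u ∈ C, v ∈ span(C)^⊥, ‖v‖ ≤ ε‖w‖}`. -/
def approxCone {E : Type*} [NormedAddCommGroup E] [InnerProductSpace ℝ E]
    (C : ConvexCone ℝ E) (ε : ℝ) : Set E :=
  {w | ∃ u ∈ C, ∃ v ∈ (Submodule.span ℝ (C : Set E))ᗮ, w = u + v ∧ ‖v‖ ≤ ε * ‖w‖}

/-- The spherical cone `P^d[c,θ] = {u ∈ U : ⟨c,u⟩ ≥ ‖u‖ cos θ}` with underlying subspace `U`. -/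
def sphericalCone {E : Type*} [NormedAddCommGroup E] [InnerProductSpace ℝ E]
    (U : Submodule ℝ E) (c : E) (θ : ℝ) : Set E :=
  {u | u ∈ U ∧ ‖u‖ * Real.cos θ ≤ ⟪c, u⟫}

/-- The normalized spherical measure `σ_{D−1}` on the unit sphere `S^{D−1} ⊆ ℝ^D`
(normalized so that `σ_{D−1}(S^{D−1}) = 1`). -/
def sphericalMeasure (D : ℕ) :
    Measure (Metric.sphere (0 : EuclideanSpace ℝ (Fin D)) 1) :=
  ((volume : Measure (EuclideanSpace ℝ (Fin D))).toSphere Set.univ)⁻¹ •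
    (volume : Measure (EuclideanSpace ℝ (Fin D))).toSphere

/-- `μ(A) := σ_{D−1}(A ∩ S^{D−1})`, as a real number. -/
def sphMu (D : ℕ) (A : Set (EuclideanSpace ℝ (Fin D))) : ℝ :=
  (sphericalMeasure D ((↑) ⁻¹' A)).toReal

theorem lintegral_cone_norm {F : Type*} [NormedAddCommGroup F] [InnerProductSpace ℝ F]
    [FiniteDimensional ℝ F] [Nontrivial F] [MeasurableSpace F] [BorelSpace F]
    {S : Set F} (hSm : MeasurableSet S) (hS : ∀ r : ℝ, 0 < r → ∀ x ∈ S, r • x ∈ S)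
    {g : ℝ → ENNReal} (hg : Measurable g) :
    ∫⁻ u in S, g ‖u‖ = (volume : Measure F).toSphere ((↑) ⁻¹' S) *
      ∫⁻ r in Set.Ioi (0 : ℝ), ENNReal.ofReal (r ^ (Module.finrank ℝ F - 1)) * g r := by
  have hmem (x : ({0}ᶜ : Set F)) : (‖(x : F)‖⁻¹ • (x : F)) ∈ S ↔ (x : F) ∈ S := by
    have hx : 0 < ‖(x : F)‖ := norm_pos_iff.2 x.2
    refine ⟨fun h => ?_, hS _ (inv_pos.2 hx) _⟩
    simpa [smul_smul, hx.ne'] using hS _ hx _ h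
  have hSs : MeasurableSet ((↑) ⁻¹' S : Set (Metric.sphere (0 : F) 1)) := measurable_subtype_coe hSm
  calc ∫⁻ u in S, g ‖u‖ = ∫⁻ u, S.indicator (fun u => g ‖u‖) u := (lintegral_indicator hSm _).symm
    _ = ∫⁻ x : ({0}ᶜ : Set F), S.indicator (fun u : F => g ‖u‖) (x : F)
          ∂((volume : Measure F).comap Subtype.val) := by
      rw [lintegral_subtype_comap (measurableSet_singleton _).compl, restrict_compl_singleton]
    _ = ∫⁻ p, ((↑) ⁻¹' S : Set (Metric.sphere (0 : F) 1)).indicator 1 p.1 * g p.2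
          ∂(volume.toSphere.prod (.volumeIoiPow (Module.finrank ℝ F - 1))) := by
      rw [← (volume : Measure F).measurePreserving_homeomorphUnitSphereProd.lintegral_comp_emb
        (Homeomorph.measurableEmbedding _)]
      refine lintegral_congr fun x => ?_
      by_cases h : (x : F) ∈ S <;> simp [Set.indicator, hmem, h]
    _ = _ := by
      rw [lintegral_prod_mul (f := ((↑) ⁻¹' S : Set (Metric.sphere (0 : F) 1)).indicator 1)
        (g := fun r : Set.Ioi (0 : ℝ) => g r) ((measurable_one.indicator hSs).aemeasurable)
        (by fun_prop), lintegral_indicator_one hSs,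
        Measure.volumeIoiPow, lintegral_withDensity_eq_lintegral_mul _ (by fun_prop) (by fun_prop)]
      congr 1
      exact lintegral_subtype_comap measurableSet_Ioi
        (fun r : ℝ => ENNReal.ofReal (r ^ (Module.finrank ℝ F - 1)) * g r)

theorem lintegral_eq_lintegral_prod_orthogonal {F : Type*} [NormedAddCommGroup F]
    [InnerProductSpace ℝ F] [FiniteDimensional ℝ F] [MeasurableSpace F] [BorelSpace F]
    (U : Submodule ℝ F) {f : F → ENNReal} (hf : Measurable f) :
    ∫⁻ w, f w = ∫⁻ p : U × Uᗮ, f (p.1 + p.2) := by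
  have h : MeasurePreserving (U.orthogonalDecomposition.toHomeomorph.toMeasurableEquiv.trans
      (MeasurableEquiv.toLp 2 (U × Uᗮ)).symm) :=
    U.orthogonalDecomposition.measurePreserving.trans
      (WithLp.volume_preserving_symm_measurableEquiv_toLp_prod U Uᗮ)
  rw [← h.symm.lintegral_comp hf]
  rfl

theorem lintegral_ofReal_pow_Ioo (n : ℕ) :
    ∫⁻ r in Set.Ioo (0:ℝ) 1, ENNReal.ofReal (r ^ n) = ENNReal.ofReal (1 / (n + 1)) := by
  rw [restrict_Ioo_eq_restrict_Ioc, ← ofReal_integral_eq_lintegral_ofReal,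
    ← intervalIntegral.integral_of_le zero_le_one]
  · simp
  · exact ((continuous_pow n).integrableOn_Icc).mono_set Set.Ioc_subset_Icc_self
  · filter_upwards [ae_restrict_mem measurableSet_Ioc] with r hr
    exact pow_nonneg hr.1.le _

theorem volume_cone_inter_ball {F : Type*} [NormedAddCommGroup F] [InnerProductSpace ℝ F]
    [FiniteDimensional ℝ F] [Nontrivial F] [MeasurableSpace F] [BorelSpace F]
    {S : Set F} (hSm : MeasurableSet S) (hS : ∀ r : ℝ, 0 < r → ∀ x ∈ S, r • x ∈ S) :
    volume (S ∩ Metric.ball 0 1) = (volume : Measure F).toSphere ((↑) ⁻¹' S) *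
      ENNReal.ofReal (1 / Module.finrank ℝ F) := by
  have h := lintegral_cone_norm hSm hS (g := (Set.Iio 1).indicator 1)
    (measurable_one.indicator measurableSet_Iio)
  have hn : 0 < Module.finrank ℝ F := Module.finrank_pos
  have h1 : ∫⁻ r in Set.Ioi (0 : ℝ), ENNReal.ofReal (r ^ (Module.finrank ℝ F - 1)) *
      (Set.Iio 1).indicator 1 r = ENNReal.ofReal (1 / Module.finrank ℝ F) := by
    have h2 := lintegral_ofReal_pow_Ioo (Module.finrank ℝ F - 1)
    rw [Nat.cast_sub hn, Nat.cast_one, sub_add_cancel] at h2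
    rw [← h2, ← Set.Ioi_inter_Iio, Set.inter_comm, ← setLIntegral_indicator measurableSet_Iio]
    refine lintegral_congr fun r => ?_
    by_cases hr : r < 1 <;> simp [hr]
  rw [h1] at h
  rw [← h, ← lintegral_indicator hSm, ← lintegral_indicator_one (hSm.inter measurableSet_ball)]
  refine lintegral_congr fun u => ?_
  by_cases hu : u ∈ S <;> by_cases hr : ‖u‖ < 1 <;> simp [Set.indicator, hr, hu]

theorem lintegral_ofReal_sin_pow (m : ℕ) {α : ℝ} (hα : 0 ≤ α) (hαπ : α ≤ Real.pi) :
    ∫⁻ x in Set.Ioc 0 α, ENNReal.ofReal (Real.sin x ^ m) =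
      ENNReal.ofReal (∫ x in (0 : ℝ)..α, Real.sin x ^ m) := by
  rw [intervalIntegral.integral_of_le hα, ofReal_integral_eq_lintegral_ofReal]
  · exact ((Real.continuous_sin.pow m).integrableOn_Icc).mono_set Set.Ioc_subset_Icc_self
  · filter_upwards [ae_restrict_mem measurableSet_Ioc] with x hx
    exact pow_nonneg (Real.sin_nonneg_of_nonneg_of_le_pi hx.1.le (hx.2.trans hαπ)) _

theorem lintegral_sector (m : ℕ) {α : ℝ} (hα : 0 ≤ α) (hαπ : α < Real.pi) :
    ∫⁻ t : ℝ, ∫⁻ r in Set.Ioi (0 : ℝ), ENNReal.ofReal (r ^ m) *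
      ({p : ℝ × ℝ | √(p.1 ^ 2 + p.2 ^ 2) * Real.cos α ≤ p.1} ∩
        {p : ℝ × ℝ | √(p.1 ^ 2 + p.2 ^ 2) < 1}).indicator 1
        (t, r) =
    ENNReal.ofReal (1 / (m + 2)) * ENNReal.ofReal (∫ x in (0 : ℝ)..α, Real.sin x ^ m) := by
  set A : Set (ℝ × ℝ) :=
    {p | √(p.1 ^ 2 + p.2 ^ 2) * Real.cos α ≤ p.1} ∩ {p | √(p.1 ^ 2 + p.2 ^ 2) < 1} with hA
  have hAm : MeasurableSet A :=
    (measurableSet_le (by fun_prop) (by fun_prop)).inter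
      (measurableSet_lt (by fun_prop) (by fun_prop))
  have hind : Measurable (A.indicator (1 : ℝ × ℝ → ENNReal)) := measurable_one.indicator hAm
  set f : ℝ × ℝ → ENNReal := fun p =>
    (Set.Ioi (0 : ℝ)).indicator (fun r => ENNReal.ofReal (r ^ m)) p.2 * A.indicator 1 p with hf
  have hfm : Measurable f :=
    (((by fun_prop : Measurable fun r : ℝ => ENNReal.ofReal (r ^ m)).indicator
      measurableSet_Ioi).comp measurable_snd).mul hind
  have hpt : ∀ p ∈ polarCoord.target, ENNReal.ofReal p.1 • f (polarCoord.symm p) =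
      (Set.Ioo (0 : ℝ) 1).indicator (fun r => ENNReal.ofReal (r ^ (m + 1))) p.1 *
        (Set.Ioc 0 α).indicator (fun x => ENNReal.ofReal (Real.sin x ^ m)) p.2 := by
    rintro ⟨ρ, x⟩ ⟨hρ, hx1, hx2⟩
    simp only [Set.mem_Ioi] at hρ
    have hsq : √((ρ * Real.cos x) ^ 2 + (ρ * Real.sin x) ^ 2) = ρ := by
      rw [mul_pow, mul_pow, ← mul_add, Real.cos_sq_add_sin_sq, mul_one, Real.sqrt_sq hρ.le]
    have hmemA : (ρ * Real.cos x, ρ * Real.sin x) ∈ A ↔ Real.cos α ≤ Real.cos x ∧ ρ < 1 := by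
      simp only [hA, Set.mem_inter_iff, Set.mem_ofPred_eq, hsq]
      rw [mul_le_mul_iff_right₀ hρ]
    simp only [polarCoord_symm_apply, hf, smul_eq_mul]
    by_cases hx0 : 0 < x
    · have hs : 0 < Real.sin x := Real.sin_pos_of_pos_of_lt_pi hx0 hx2
      have hcos : Real.cos α ≤ Real.cos x ↔ x ≤ α :=
        Real.strictAntiOn_cos.le_iff_ge ⟨hα, hαπ.le⟩ ⟨hx0.le, hx2.le⟩
      rw [hcos] at hmemA
      by_cases h1 : ρ < 1 <;> by_cases h2 : x ≤ α <;>
        simp [Set.indicator, hmemA, h1, h2, hρ, hx0, hs]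
      rw [← ENNReal.ofReal_mul hρ.le, ← ENNReal.ofReal_mul (by positivity)]
      congr 1
      ring
    · have hs : ¬ 0 < ρ * Real.sin x := by
        have := Real.sin_nonpos_of_nonpos_of_neg_pi_le (not_lt.1 hx0) hx1.le
        nlinarith
      simp [Set.indicator, hs, hx0]
  calc _ = ∫⁻ t : ℝ, ∫⁻ r : ℝ, f (t, r) := by
        refine lintegral_congr fun t => ?_
        rw [← lintegral_indicator measurableSet_Ioi]
        refine lintegral_congr fun r => ?_
        by_cases hr : 0 < r <;> simp [hf, hr]
    _ = ∫⁻ p, f p := by rw [Measure.volume_eq_prod, lintegral_prod _ hfm.aemeasurable]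
    _ = ∫⁻ p in polarCoord.target,
          (Set.Ioo (0 : ℝ) 1).indicator (fun r => ENNReal.ofReal (r ^ (m + 1))) p.1 *
        (Set.Ioc 0 α).indicator (fun x => ENNReal.ofReal (Real.sin x ^ m)) p.2 := by
        rw [← lintegral_comp_polarCoord_symm]
        exact setLIntegral_congr_fun polarCoord.open_target.measurableSet hpt
    _ = _ := by
        rw [polarCoord_target, Measure.volume_eq_prod, ← Measure.prod_restrict,
          lintegral_prod_mul (by fun_prop (disch := measurability))
            (by fun_prop (disch := measurability)),
          setLIntegral_indicator measurableSet_Ioo, setLIntegral_indicator measurableSet_Ioc,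
          Set.inter_eq_left.2 Set.Ioo_subset_Ioi_self,
          Set.inter_eq_left.2 (show Set.Ioc 0 α ⊆ Set.Ioo (-Real.pi) Real.pi from
            fun x hx => ⟨by linarith [hx.1, Real.pi_pos], hx.2.trans_lt hαπ⟩),
          lintegral_ofReal_sin_pow m hα hαπ.le, lintegral_ofReal_pow_Ioo]
        congr 3
        push_cast; ring

theorem volume_cap_inter_ball {F : Type*} [NormedAddCommGroup F] [InnerProductSpace ℝ F]
    [FiniteDimensional ℝ F] [MeasurableSpace F] [BorelSpace F] (hF : 2 ≤ Module.finrank ℝ F)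
    {c : F} (hc : ‖c‖ = 1) {α : ℝ} (hα : 0 ≤ α) (hαπ : α < Real.pi) :
    volume ({u : F | ‖u‖ * Real.cos α ≤ ⟪c, u⟫} ∩ Metric.ball 0 1) =
      ENNReal.ofReal ((Module.finrank ℝ F - 1) / Module.finrank ℝ F *
        (√Real.pi ^ (Module.finrank ℝ F - 1) / Real.Gamma ((Module.finrank ℝ F - 1) / 2 + 1)) *
        ∫ x in (0 : ℝ)..α, Real.sin x ^ (Module.finrank ℝ F - 2)) := by
  set n := Module.finrank ℝ F with hn
  have hc0 : c ≠ 0 := by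
    rintro rfl
    simp at hc
  have hrank : Module.finrank ℝ (ℝ ∙ c)ᗮ = n - 1 := by
    have := (ℝ ∙ c).finrank_add_finrank_orthogonal
    rw [finrank_span_singleton hc0] at this
    omega
  have : Nontrivial (ℝ ∙ c)ᗮ := Module.nontrivial_of_finrank_pos (R := ℝ) (by omega)
  set A : Set F := {u : F | ‖u‖ * Real.cos α ≤ ⟪c, u⟫} ∩ Metric.ball 0 1 with hA
  have hAm : MeasurableSet A :=
    (measurableSet_le (by fun_prop) (by fun_prop)).inter measurableSet_ball
  set B : Set (ℝ × ℝ) :=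
    {p | √(p.1 ^ 2 + p.2 ^ 2) * Real.cos α ≤ p.1} ∩ {p | √(p.1 ^ 2 + p.2 ^ 2) < 1} with hB
  have hBm : MeasurableSet B :=
    (measurableSet_le (by fun_prop) (by fun_prop)).inter
      (measurableSet_lt (by fun_prop) (by fun_prop))
  have hAB (t : ℝ) (y : (ℝ ∙ c)ᗮ) : t • c + (y : F) ∈ A ↔ (t, ‖y‖) ∈ B := by
    have hcy : ⟪c, (y : F)⟫ = 0 := Submodule.mem_orthogonal_singleton_iff_inner_right.1 y.2
    have hnorm : ‖t • c + (y : F)‖ = √(t ^ 2 + ‖y‖ ^ 2) := by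
      rw [eq_comm, Real.sqrt_eq_iff_mul_self_eq (by positivity) (by positivity),
        norm_add_sq_eq_norm_sq_add_norm_sq_real]
      · simp [norm_smul, hc, pow_two]
      · simp [inner_smul_left, hcy]
    have hinner : ⟪c, t • c + (y : F)⟫ = t := by
      simp [inner_add_right, inner_smul_right, hcy, hc]
    simp [hA, hB, hnorm, hinner]
  have hline := (LinearIsometryEquiv.toSpanUnitSingleton (𝕜 := ℝ) c hc).measurePreserving
  have hind : Measurable (A.indicator (1 : F → ENNReal)) := measurable_one.indicator hAm
  have hindB : Measurable (B.indicator (1 : ℝ × ℝ → ENNReal)) := measurable_one.indicator hBm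
  have hint (t : ℝ) : ∫⁻ y : (ℝ ∙ c)ᗮ, A.indicator 1 (t • c + (y : F)) =
      (volume : Measure (ℝ ∙ c)ᗮ).toSphere Set.univ *
        ∫⁻ r in Set.Ioi (0 : ℝ), ENNReal.ofReal (r ^ (n - 2)) * B.indicator 1 (t, r) := by
    have h := lintegral_cone_norm (F := (ℝ ∙ c)ᗮ) MeasurableSet.univ (by simp)
      (g := fun r => B.indicator 1 (t, r)) (by fun_prop)
    rw [Measure.restrict_univ, Set.preimage_univ, hrank, Nat.sub_sub] at h
    rw [← h]
    refine lintegral_congr fun y => ?_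
    by_cases hy : (t, ‖y‖) ∈ B
    · rw [Set.indicator_of_mem hy, Set.indicator_of_mem ((hAB t y).2 hy)]
      rfl
    · rw [Set.indicator_of_notMem hy, Set.indicator_of_notMem (mt (hAB t y).1 hy)]
  have hcard : (2 : ℝ) ≤ n := by exact_mod_cast hF
  have h1 : (0 : ℝ) ≤ n - 1 := by linarith
  have hG : 0 < Real.Gamma ((n - 1 : ℝ) / 2 + 1) := Real.Gamma_pos_of_pos (by positivity)
  calc volume A = ∫⁻ p : (ℝ ∙ c) × (ℝ ∙ c)ᗮ, A.indicator 1 ((p.1 : F) + p.2) := by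
        rw [← lintegral_indicator_one hAm, lintegral_eq_lintegral_prod_orthogonal (ℝ ∙ c) hind]
    _ = ∫⁻ u : ℝ ∙ c, ∫⁻ y : (ℝ ∙ c)ᗮ, A.indicator 1 ((u : F) + y) := by
        rw [Measure.volume_eq_prod, lintegral_prod _ (by fun_prop)]
    _ = ∫⁻ t : ℝ, ∫⁻ y : (ℝ ∙ c)ᗮ, A.indicator 1 (t • c + (y : F)) := by
        rw [← hline.lintegral_comp_emb
          (LinearIsometryEquiv.toSpanUnitSingleton (𝕜 := ℝ) c hc).toHomeomorph.measurableEmbedding]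
        rfl
    _ = (volume : Measure (ℝ ∙ c)ᗮ).toSphere Set.univ *
          (ENNReal.ofReal (1 / ((n - 2 : ℕ) + 2)) *
            ENNReal.ofReal (∫ x in (0 : ℝ)..α, Real.sin x ^ (n - 2))) := by
        simp_rw [hint]
        rw [lintegral_const_mul' _ _ (measure_ne_top _ _), lintegral_sector _ hα hαπ]
    _ = _ := by
        rw [Measure.toSphere_apply_univ, InnerProductSpace.volume_ball, hrank, Nat.cast_sub hF,
          ← ENNReal.ofReal_natCast, Nat.cast_ofNat, sub_add_cancel,
          Nat.cast_sub (by omega : 1 ≤ n), Nat.cast_one]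
        simp only [ENNReal.ofReal_one, one_pow, one_mul]
        rw [← ENNReal.ofReal_mul h1, ← ENNReal.ofReal_mul (by positivity),
          ← ENNReal.ofReal_mul (by positivity)]
        congr 1
        ring

theorem exists_volume_proj_mem_cone_eq_mul {F : Type*} [NormedAddCommGroup F]
    [InnerProductSpace ℝ F] [FiniteDimensional ℝ F] [MeasurableSpace F] [BorelSpace F]
    (U : Submodule ℝ F) [Nontrivial U] (ε : ℝ) :
    ∃ K : ENNReal, ∀ S : Set U, MeasurableSet S → (∀ r : ℝ, 0 < r → ∀ x ∈ S, r • x ∈ S) →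
      volume (((U.orthogonalProjectionOnto ⁻¹' S) ∩
        {w | ‖Uᗮ.orthogonalProjectionOnto w‖ ≤ ε * ‖w‖}) ∩ Metric.ball 0 1) =
      (volume : Measure U).toSphere ((↑) ⁻¹' S) * K := by
  set B : Set (ℝ × ℝ) :=
    {p | p.2 ≤ ε * √(p.1 ^ 2 + p.2 ^ 2)} ∩ {p | √(p.1 ^ 2 + p.2 ^ 2) < 1} with hB
  have hBm : MeasurableSet B :=
    (measurableSet_le (by fun_prop) (by fun_prop)).inter
      (measurableSet_lt (by fun_prop) (by fun_prop))
  have hindB : Measurable (B.indicator (1 : ℝ × ℝ → ENNReal)) := measurable_one.indicator hBm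
  refine ⟨∫⁻ v : Uᗮ, ∫⁻ r in Set.Ioi (0 : ℝ),
    ENNReal.ofReal (r ^ (Module.finrank ℝ U - 1)) * B.indicator 1 (r, ‖v‖), fun S hSm hS => ?_⟩
  set A : Set F := ((U.orthogonalProjectionOnto ⁻¹' S) ∩
        {w | ‖Uᗮ.orthogonalProjectionOnto w‖ ≤ ε * ‖w‖}) ∩ Metric.ball 0 1 with hA
  have hAm : MeasurableSet A :=
    ((U.orthogonalProjectionOnto.continuous.measurable hSm).inter
      (measurableSet_le (by fun_prop) (by fun_prop))).inter measurableSet_ball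
  have hind : Measurable (A.indicator (1 : F → ENNReal)) := measurable_one.indicator hAm
  have hAB (u : U) (v : Uᗮ) : (u : F) + v ∈ A ↔ u ∈ S ∧ (‖u‖, ‖v‖) ∈ B := by
    have hnorm : ‖(u : F) + v‖ = √(‖u‖ ^ 2 + ‖v‖ ^ 2) := by
      rw [norm_add_eq_sqrt_iff_real_inner_eq_zero.2 (U.inner_right_of_mem_orthogonal u.2 v.2)]
      simp [pow_two]
    have hu : U.orthogonalProjectionOnto ((u : F) + v) = u := by
      simp
    have hv : Uᗮ.orthogonalProjectionOnto ((u : F) + v) = v := by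
      simp
    simp only [hA, hB, Set.mem_inter_iff, Set.mem_preimage, Set.mem_ofPred_eq, hu, hv,
      mem_ball_zero_iff, hnorm, and_assoc]
  rw [← lintegral_indicator_one hAm, lintegral_eq_lintegral_prod_orthogonal U hind,
    Measure.volume_eq_prod, lintegral_prod_symm _ (by fun_prop),
    ← lintegral_const_mul' _ _ (measure_ne_top _ _)]
  refine lintegral_congr fun v => ?_
  rw [← lintegral_cone_norm hSm hS (g := fun r => B.indicator 1 (r, ‖v‖)) (by fun_prop),
    ← lintegral_indicator hSm]
  refine lintegral_congr fun u => ?_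
  by_cases hu : u ∈ S
  · rw [Set.indicator_of_mem hu]
    by_cases h : (‖u‖, ‖v‖) ∈ B
    · rw [Set.indicator_of_mem h, Set.indicator_of_mem ((hAB u v).2 ⟨hu, h⟩)]
      rfl
    · rw [Set.indicator_of_notMem h, Set.indicator_of_notMem (mt (fun h' => ((hAB u v).1 h').2) h)]
  · rw [Set.indicator_of_notMem hu,
      Set.indicator_of_notMem (mt (fun h' => ((hAB u v).1 h').1) hu)]

theorem le_span_of_sphericalCone_subset {F : Type*} [NormedAddCommGroup F] [InnerProductSpace ℝ F]
    {U : Submodule ℝ F} {c : F} (hcU : c ∈ U) (hc : ‖c‖ = 1) {ψ : ℝ}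
    (hψ : ψ ∈ Set.Ioo 0 (Real.pi / 2)) {C : Set F} (h : sphericalCone U c ψ ⊆ C) :
    U ≤ Submodule.span ℝ C := by
  have hcos : Real.cos ψ < 1 := by
    have := Real.cos_lt_cos_of_nonneg_of_le_pi_div_two le_rfl hψ.2.le hψ.1
    simpa using this
  have hcos0 : 0 ≤ Real.cos ψ := Real.cos_nonneg_of_neg_pi_div_two_le_of_le
    (by linarith [hψ.1, Real.pi_pos]) hψ.2.le
  have hcC : c ∈ Submodule.span ℝ C :=
    Submodule.subset_span (h ⟨hcU, by rw [hc, real_inner_self_eq_norm_sq, hc]; linarith⟩)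
  intro u hu
  set t : ℝ := 2 * ‖u‖ / (1 - Real.cos ψ) with ht
  have ht' : t * (1 - Real.cos ψ) = 2 * ‖u‖ := div_mul_cancel₀ _ (by linarith)
  have ht0 : 0 ≤ t := div_nonneg (by positivity) (by linarith)
  have hmem : t • c + u ∈ Submodule.span ℝ C := by
    refine Submodule.subset_span (h ⟨U.add_mem (U.smul_mem _ hcU) hu, ?_⟩)
    have h1 : ‖t • c + u‖ ≤ t + ‖u‖ := by
      simpa [norm_smul, hc, abs_of_nonneg ht0] using norm_add_le (t • c) u
    have h2 : -‖u‖ ≤ ⟪c, u⟫ := by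
      have := (abs_le.1 (abs_real_inner_le_norm c u)).1
      rwa [hc, one_mul] at this
    have h3 : ⟪c, t • c + u⟫ = t + ⟪c, u⟫ := by
      simp [inner_add_right, inner_smul_right, hc]
    rw [h3]
    nlinarith [mul_le_mul_of_nonneg_right h1 hcos0, norm_nonneg u,
      mul_nonneg (norm_nonneg u) (sub_nonneg.2 hcos.le)]
  simpa using Submodule.sub_mem _ hmem (Submodule.smul_mem _ t hcC)

theorem smul_mem_cap {F : Type*} [NormedAddCommGroup F] [InnerProductSpace ℝ F] {c x : F} {α r : ℝ}
    (hx : x ∈ {u : F | ‖u‖ * Real.cos α ≤ ⟪c, u⟫}) (hr : 0 < r) :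
    r • x ∈ {u : F | ‖u‖ * Real.cos α ≤ ⟪c, u⟫} := by
  simp only [Set.mem_ofPred_eq, norm_smul, inner_smul_right, Real.norm_of_nonneg hr.le,
    mul_assoc] at hx ⊢
  exact mul_le_mul_of_nonneg_left hx hr.le

theorem cap_subset_proj_mem_cap {F : Type*} [NormedAddCommGroup F] [InnerProductSpace ℝ F]
    [FiniteDimensional ℝ F] {U : Submodule ℝ F} (c : U) (hc : ‖c‖ = 1) {θ : ℝ}
    (hθ : θ ∈ Set.Icc 0 (Real.pi / 2)) :
    {w : F | ‖w‖ * Real.cos θ ≤ ⟪(c : F), w⟫} ⊆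
      (U.orthogonalProjectionOnto ⁻¹' {u : U | ‖u‖ * Real.cos θ ≤ ⟪c, u⟫}) ∩
        {w | ‖Uᗮ.orthogonalProjectionOnto w‖ ≤ Real.sin θ * ‖w‖} := by
  intro w hw
  have hcos : 0 ≤ Real.cos θ := Real.cos_nonneg_of_neg_pi_div_two_le_of_le
    (by linarith [hθ.1, Real.pi_pos]) hθ.2
  have hsin : 0 ≤ Real.sin θ := Real.sin_nonneg_of_nonneg_of_le_pi hθ.1
    (by linarith [hθ.2, Real.pi_pos])
  have hinner : ⟪c, U.orthogonalProjectionOnto w⟫ = ⟪(c : F), w⟫ :=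
    U.inner_orthogonalProjectionOnto_eq_of_mem_left c w
  have hle : ‖U.orthogonalProjectionOnto w‖ ≤ ‖w‖ := U.norm_orthogonalProjectionOnto_apply_le w
  have hcs : ⟪c, U.orthogonalProjectionOnto w⟫ ≤ ‖U.orthogonalProjectionOnto w‖ := by
    simpa [hc] using real_inner_le_norm c (U.orthogonalProjectionOnto w)
  have hw' : ‖w‖ * Real.cos θ ≤ ⟪c, U.orthogonalProjectionOnto w⟫ := hinner ▸ hw
  refine ⟨(mul_le_mul_of_nonneg_right hle hcos).trans hw', ?_⟩
  have hpyth := Submodule.norm_sq_eq_add_norm_sq_projection w U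
  change ‖Uᗮ.orthogonalProjectionOnto w‖ ≤ Real.sin θ * ‖w‖
  refine (sq_le_sq₀ (norm_nonneg _) (mul_nonneg hsin (norm_nonneg w))).1 ?_
  have h1 : (‖w‖ * Real.cos θ) ^ 2 ≤ ‖U.orthogonalProjectionOnto w‖ ^ 2 :=
    pow_le_pow_left₀ (by positivity) (hw'.trans hcs) 2
  nlinarith [Real.sin_sq_add_cos_sq θ]

theorem gamma_mul_volume_ball_coeff (D : ℕ) (hD : 2 ≤ D) :
    Real.Gamma ((D : ℝ) / 2) / (√Real.pi * Real.Gamma (((D : ℝ) - 1) / 2)) *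
      (√Real.pi ^ D / Real.Gamma ((D : ℝ) / 2 + 1)) =
    (D - 1) / D * (√Real.pi ^ (D - 1) / Real.Gamma (((D : ℝ) - 1) / 2 + 1)) := by
  have hD' : (2 : ℝ) ≤ D := by exact_mod_cast hD
  have h1 : (0 : ℝ) < D - 1 := by linarith
  have hG := Real.Gamma_pos_of_pos (show (0 : ℝ) < D / 2 by linarith)
  have hG' := Real.Gamma_pos_of_pos (show (0 : ℝ) < (D - 1) / 2 by linarith)
  have hpi : 0 < √Real.pi := Real.sqrt_pos.2 Real.pi_pos
  rw [Real.Gamma_add_one (by positivity), Real.Gamma_add_one (by positivity)]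
  obtain ⟨k, rfl⟩ : ∃ k, D = k + 1 := ⟨D - 1, by omega⟩
  rw [Nat.add_sub_cancel, pow_succ]
  field_simp

theorem integral_sin_pow_pos_of_le_pi (m : ℕ) {α : ℝ} (hα : 0 < α) (hαπ : α ≤ Real.pi) :
    0 < ∫ x in (0 : ℝ)..α, Real.sin x ^ m :=
  intervalIntegral.intervalIntegral_pos_of_pos_on
    ((Real.continuous_sin.pow m).intervalIntegrable _ _)
    (fun _ hx => pow_pos (Real.sin_pos_of_pos_of_lt_pi hx.1 (hx.2.trans_le hαπ)) _) hα

theorem integral_sin_pow_mono (m : ℕ) {α β : ℝ} (hα : 0 ≤ α) (hαβ : α ≤ β) (hβ : β ≤ Real.pi) :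
    ∫ x in (0 : ℝ)..α, Real.sin x ^ m ≤ ∫ x in (0 : ℝ)..β, Real.sin x ^ m := by
  rw [← intervalIntegral.integral_add_adjacent_intervals
    ((by fun_prop : Continuous fun x => Real.sin x ^ m).intervalIntegrable 0 α)
    ((by fun_prop : Continuous fun x => Real.sin x ^ m).intervalIntegrable α β)]
  refine le_add_of_nonneg_right (intervalIntegral.integral_nonneg hαβ fun _ hx => ?_)
  exact pow_nonneg (Real.sin_nonneg_of_nonneg_of_le_pi (hα.trans hx.1) (hx.2.trans hβ)) _

theorem sphMu_cone {D : ℕ} (hD : 1 ≤ D) {A : Set (EuclideanSpace ℝ (Fin D))}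
    (hAm : MeasurableSet A) (hA : ∀ r : ℝ, 0 < r → ∀ x ∈ A, r • x ∈ A) :
    sphMu D A * (√Real.pi ^ D / Real.Gamma ((D : ℝ) / 2 + 1)) =
      (volume (A ∩ Metric.ball 0 1)).toReal := by
  have : Nonempty (Fin D) := ⟨⟨0, hD⟩⟩
  have hD' : (0 : ℝ) < D := by exact_mod_cast hD
  have hG := Real.Gamma_pos_of_pos (show (0 : ℝ) < D / 2 + 1 by positivity)
  have hpi : 0 < √Real.pi := Real.sqrt_pos.2 Real.pi_pos
  rw [volume_cone_inter_ball hAm hA, sphMu, sphericalMeasure, Measure.smul_apply,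
    Measure.toSphere_apply_univ, EuclideanSpace.volume_ball, smul_eq_mul, ENNReal.toReal_mul,
    ENNReal.toReal_mul, ENNReal.toReal_inv, finrank_euclideanSpace, Fintype.card_fin]
  simp only [ENNReal.ofReal_one, one_pow, one_mul, ENNReal.toReal_mul, ENNReal.toReal_natCast]
  rw [ENNReal.toReal_ofReal (by positivity), ENNReal.toReal_ofReal (by positivity)]
  field_simp

theorem sphMu_mono {D : ℕ} {A B : Set (EuclideanSpace ℝ (Fin D))} (hD : 1 ≤ D) (h : A ⊆ B) :
    sphMu D A ≤ sphMu D B := by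
  have : Nonempty (Fin D) := ⟨⟨0, hD⟩⟩
  refine ENNReal.toReal_mono ?_ (measure_mono (Set.preimage_mono h))
  rw [sphericalMeasure, Measure.smul_apply, smul_eq_mul]
  refine ENNReal.mul_ne_top (ENNReal.inv_ne_top.2 ?_) (measure_ne_top _ _)
  exact Measure.measure_univ_ne_zero.2 (Measure.toSphere_ne_zero _)

theorem volume_proj_mem_cap_mul_integral {F : Type*} [NormedAddCommGroup F]
    [InnerProductSpace ℝ F] [FiniteDimensional ℝ F] [MeasurableSpace F] [BorelSpace F]
    (U : Submodule ℝ F) (hU : 2 ≤ Module.finrank ℝ U) {c : U} (hc : ‖c‖ = 1) (ε : ℝ)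
    {α β : ℝ} (hα : α ∈ Set.Ico 0 Real.pi) (hβ : β ∈ Set.Ico 0 Real.pi) :
    (volume (((U.orthogonalProjectionOnto ⁻¹' {u : U | ‖u‖ * Real.cos α ≤ ⟪c, u⟫}) ∩
        {w | ‖Uᗮ.orthogonalProjectionOnto w‖ ≤ ε * ‖w‖}) ∩ Metric.ball 0 1)).toReal *
      ∫ x in (0 : ℝ)..β, Real.sin x ^ (Module.finrank ℝ U - 2) =
    (volume (((U.orthogonalProjectionOnto ⁻¹' {u : U | ‖u‖ * Real.cos β ≤ ⟪c, u⟫}) ∩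
        {w | ‖Uᗮ.orthogonalProjectionOnto w‖ ≤ ε * ‖w‖}) ∩ Metric.ball 0 1)).toReal *
      ∫ x in (0 : ℝ)..α, Real.sin x ^ (Module.finrank ℝ U - 2) := by
  have : Nontrivial U := Module.nontrivial_of_finrank_pos (R := ℝ) (by omega)
  obtain ⟨K, hK⟩ := exists_volume_proj_mem_cone_eq_mul U ε
  set n := Module.finrank ℝ U with hn
  have hn2 : (2 : ℝ) ≤ n := by exact_mod_cast hU
  have h1 : (0 : ℝ) ≤ n - 1 := by linarith
  have hG : 0 < Real.Gamma ((n - 1 : ℝ) / 2 + 1) := Real.Gamma_pos_of_pos (by positivity)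
  have hcap (γ : ℝ) (hγ : γ ∈ Set.Ico 0 Real.pi) :
      (volume (((U.orthogonalProjectionOnto ⁻¹' {u : U | ‖u‖ * Real.cos γ ≤ ⟪c, u⟫}) ∩
        {w | ‖Uᗮ.orthogonalProjectionOnto w‖ ≤ ε * ‖w‖}) ∩ Metric.ball 0 1)).toReal =
      ((n - 1) / n * (√Real.pi ^ (n - 1) / Real.Gamma ((n - 1) / 2 + 1)) *
        ∫ x in (0 : ℝ)..γ, Real.sin x ^ (n - 2)) * n * K.toReal := by
    have hm : MeasurableSet {u : U | ‖u‖ * Real.cos γ ≤ ⟪c, u⟫} :=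
      measurableSet_le (by fun_prop) (by fun_prop)
    have hcone : ∀ r : ℝ, 0 < r → ∀ x ∈ {u : U | ‖u‖ * Real.cos γ ≤ ⟪c, u⟫},
        r • x ∈ {u : U | ‖u‖ * Real.cos γ ≤ ⟪c, u⟫} := fun r hr x hx => smul_mem_cap hx hr
    have hI : 0 ≤ ∫ x in (0 : ℝ)..γ, Real.sin x ^ (n - 2) := by
      simpa using integral_sin_pow_mono (n - 2) le_rfl hγ.1 hγ.2.le
    have h := congrArg ENNReal.toReal (volume_cone_inter_ball hm hcone)
    rw [volume_cap_inter_ball hU hc hγ.1 hγ.2, ENNReal.toReal_mul,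
      ENNReal.toReal_ofReal (by positivity), ENNReal.toReal_ofReal (by positivity)] at h
    rw [hK _ hm hcone, ENNReal.toReal_mul, h, mul_assoc _ (1 / (n : ℝ)) (n : ℝ),
      one_div_mul_cancel (by positivity), mul_one]
  rw [hcap α hα, hcap β hβ]
  ring

/-- **Packing lower bound on `μ(C^ε)` (Proposition 2).** Let `2 ≤ d ≤ D`, `D ≥ 3`, and let
`C ⊆ ℝ^D` be a `d`-dimensional convex cone containing a `d`-dimensional spherical cone
`P^d[c,ψ]` for a unit vector `c` and `ψ ∈ (0,π/2)`. Let `ε ∈ (0,1)`, `θ := arcsin ε`, and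
assume `2θ ≤ ψ`. Then
`μ(C^ε) ≥ (Γ(D/2)/(√π·Γ((D−1)/2))) · (∫₀^ψ sin^{d−2} / ∫₀^{2θ} sin^{d−2}) · ∫₀^θ sin^{D−2}`. -/
theorem stmt_10 (D d : ℕ) (hd : 2 ≤ d) (hdD : d ≤ D) (hD : 3 ≤ D)
    (C : ConvexCone ℝ (EuclideanSpace ℝ (Fin D)))
    (hCdim : Module.finrank ℝ
      (Submodule.span ℝ (C : Set (EuclideanSpace ℝ (Fin D)))) = d)
    (U : Submodule ℝ (EuclideanSpace ℝ (Fin D))) (hUdim : Module.finrank ℝ U = d)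
    (c : EuclideanSpace ℝ (Fin D)) (hcU : c ∈ U) (hc : ‖c‖ = 1)
    (ψ : ℝ) (hψ : ψ ∈ Set.Ioo 0 (Real.pi / 2))
    (hsup : sphericalCone U c ψ ⊆ (C : Set (EuclideanSpace ℝ (Fin D))))
    (ε : ℝ) (hε : ε ∈ Set.Ioo (0 : ℝ) 1)
    (h2θ : 2 * Real.arcsin ε ≤ ψ) :
    Real.Gamma ((D : ℝ) / 2) / (Real.sqrt Real.pi * Real.Gamma (((D : ℝ) - 1) / 2)) *
        ((∫ x in (0 : ℝ)..ψ, Real.sin x ^ (d - 2)) /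
          (∫ x in (0 : ℝ)..(2 * Real.arcsin ε), Real.sin x ^ (d - 2))) *
        (∫ x in (0 : ℝ)..(Real.arcsin ε), Real.sin x ^ (D - 2)) ≤
      sphMu D (approxCone C ε) := by
  obtain ⟨hψ0, hψ1⟩ := hψ
  have hpi := Real.pi_pos
  set θ := Real.arcsin ε with hθ
  have hθ0 : 0 < θ := Real.arcsin_pos.2 hε.1
  have hsin : Real.sin θ = ε := Real.sin_arcsin (by linarith [hε.1]) hε.2.le
  have hU : U = Submodule.span ℝ (C : Set (EuclideanSpace ℝ (Fin D))) :=
    Submodule.eq_of_le_of_finrank_eq (le_span_of_sphericalCone_subset hcU hc ⟨hψ0, hψ1⟩ hsup)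
      (hUdim.trans hCdim.symm)
  lift c to U using hcU
  have hc' : ‖c‖ = 1 := hc
  set A : ℝ → Set (EuclideanSpace ℝ (Fin D)) := fun α =>
    (U.orthogonalProjectionOnto ⁻¹' {u : U | ‖u‖ * Real.cos α ≤ ⟪c, u⟫}) ∩
      {w | ‖Uᗮ.orthogonalProjectionOnto w‖ ≤ ε * ‖w‖} with hA
  have hAm : MeasurableSet (A ψ) :=
    (U.orthogonalProjectionOnto.continuous.measurable
      (measurableSet_le (by fun_prop) (by fun_prop))).inter
      (measurableSet_le (by fun_prop) (by fun_prop))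
  have hAcone : ∀ r : ℝ, 0 < r → ∀ x ∈ A ψ, r • x ∈ A ψ := by
    rintro r hr x ⟨h1, h2⟩
    constructor
    · rw [Set.mem_preimage, map_smul]
      exact smul_mem_cap h1 hr
    · simp only [Set.mem_ofPred_eq, map_smul, norm_smul, Real.norm_of_nonneg hr.le]
      rw [mul_left_comm]
      exact mul_le_mul_of_nonneg_left h2 hr.le
  have hAC : A ψ ⊆ approxCone C ε := by
    rintro w ⟨h1, h2⟩
    refine ⟨U.orthogonalProjectionOnto w, hsup ⟨Subtype.coe_prop _, h1⟩,
      Uᗮ.orthogonalProjectionOnto w, hU ▸ Subtype.coe_prop _, ?_, h2⟩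
    simp
  have hμ : sphMu D (A ψ) ≤ sphMu D (approxCone C ε) := sphMu_mono (by omega) hAC
  have hμA := sphMu_cone (by omega) hAm hAcone
  have hratio := volume_proj_mem_cap_mul_integral U (hUdim.symm ▸ hd) hc' ε
    (α := ψ) (β := θ) ⟨hψ0.le, by linarith⟩ ⟨hθ0.le, by linarith⟩
  rw [hUdim] at hratio
  change (volume (A ψ ∩ Metric.ball 0 1)).toReal * _ =
    (volume (A θ ∩ Metric.ball 0 1)).toReal * _ at hratio
  have hcap := volume_cap_inter_ball (F := EuclideanSpace ℝ (Fin D))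
    (by rw [finrank_euclideanSpace_fin]; omega) hc hθ0.le (by linarith : θ < Real.pi)
  rw [finrank_euclideanSpace_fin, ← gamma_mul_volume_ball_coeff D (by omega)] at hcap
  have hcapA : (volume ({u | ‖u‖ * Real.cos θ ≤ ⟪(c : EuclideanSpace ℝ (Fin D)), u⟫} ∩
      Metric.ball 0 1)).toReal ≤ (volume (A θ ∩ Metric.ball 0 1)).toReal := by
    refine ENNReal.toReal_mono (measure_inter_lt_top_of_right_ne_top measure_ball_lt_top.ne).ne
      (measure_mono (Set.inter_subset_inter_left _ ?_))
    have := cap_subset_proj_mem_cap c hc' (θ := θ) ⟨hθ0.le, by linarith⟩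
    rwa [hsin] at this
  have hD3 : (3 : ℝ) ≤ D := by exact_mod_cast hD
  set G := Real.Gamma ((D : ℝ) / 2) / (√Real.pi * Real.Gamma (((D : ℝ) - 1) / 2)) with hGdef
  set b := √Real.pi ^ D / Real.Gamma ((D : ℝ) / 2 + 1) with hbdef
  have hG : 0 < G := div_pos (Real.Gamma_pos_of_pos (by linarith))
    (mul_pos (Real.sqrt_pos.2 hpi) (Real.Gamma_pos_of_pos (by linarith)))
  have hb : 0 < b := div_pos (pow_pos (Real.sqrt_pos.2 hpi) _)
    (Real.Gamma_pos_of_pos (by linarith))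
  have hJ := integral_sin_pow_pos_of_le_pi (D - 2) hθ0 (by linarith)
  have hIψ := integral_sin_pow_pos_of_le_pi (d - 2) hψ0 (by linarith)
  have hIθ := integral_sin_pow_pos_of_le_pi (d - 2) hθ0 (by linarith)
  have hIθ2 := integral_sin_pow_mono (d - 2) hθ0.le (by linarith : θ ≤ 2 * θ) (by linarith)
  rw [hcap, ENNReal.toReal_ofReal (by positivity)] at hcapA
  refine le_trans ?_ hμ
  set Iψ := ∫ x in (0 : ℝ)..ψ, Real.sin x ^ (d - 2)
  set Iθ := ∫ x in (0 : ℝ)..θ, Real.sin x ^ (d - 2)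
  set I2 := ∫ x in (0 : ℝ)..(2 * θ), Real.sin x ^ (d - 2)
  set J := ∫ x in (0 : ℝ)..θ, Real.sin x ^ (D - 2)
  calc G * (Iψ / I2) * J ≤ G * (Iψ / Iθ) * J := by gcongr
    _ = G * b * J * Iψ / (Iθ * b) := by field_simp
    _ ≤ (volume (A θ ∩ Metric.ball 0 1)).toReal * Iψ / (Iθ * b) := by gcongr
    _ = sphMu D (A ψ) := by
      rw [← hratio, ← hμA]
      field_simp
end
end

section
/- Let 2 ≤ d < D, and let C ⊆ ℝ^D be a d-dimensional convex cone contained in a d-dimensional spherical cone P^d[c, ψ] for some unit vector c and ψ ∈ (0, π/2). Then for every ε ∈ (0,1), the spherical measure of the ε-approximate cone satisfies μ(C^ε) ≤ (Γ(D/2)/(Γ((D−d+1)/2) · Γ((d−1)/2))) · ε^{D−d} · ∫₀^ψ sin^{d−2}x dx, where Γ is the Gamma function. -/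
open RealInnerProductSpace MeasureTheory

noncomputable section

open scoped ENNReal

/-- Integration of a radial function in polar coordinates. -/
theorem lintegral_fun_norm_addHaar {E : Type*} [NormedAddCommGroup E] [NormedSpace ℝ E]
    [FiniteDimensional ℝ E] [Nontrivial E] [MeasurableSpace E] [BorelSpace E] (μ : Measure E)
    [μ.IsAddHaarMeasure] {f : ℝ → ℝ≥0∞} (hf : Measurable f) :
    ∫⁻ x, f ‖x‖ ∂μ = μ.toSphere Set.univ *
      ∫⁻ r in Set.Ioi (0 : ℝ), ENNReal.ofReal (r ^ (Module.finrank ℝ E - 1)) * f r := by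
  have hpres := μ.measurePreserving_homeomorphUnitSphereProd
  calc ∫⁻ x, f ‖x‖ ∂μ = ∫⁻ x : ({0}ᶜ : Set E), f ‖x.1‖ ∂(μ.comap (↑)) := by
        rw [lintegral_subtype_comap (measurableSet_singleton _).compl (fun x ↦ f ‖x‖),
          restrict_compl_singleton]
    _ = ∫⁻ p, f (p.2 : ℝ) ∂(μ.toSphere.prod (.volumeIoiPow (Module.finrank ℝ E - 1))) := by
        rw [← hpres.lintegral_comp_emb (Homeomorph.measurableEmbedding _)]
        simp
    _ = μ.toSphere Set.univ *
          ∫⁻ r, f (r : ℝ) ∂(Measure.volumeIoiPow (Module.finrank ℝ E - 1)) := by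
        rw [lintegral_prod _ (by fun_prop)]
        simp [mul_comm]
    _ = _ := by
        rw [Measure.volumeIoiPow, lintegral_withDensity_eq_lintegral_mul _ (by fun_prop)
          (by fun_prop), ← lintegral_subtype_comap measurableSet_Ioi]
        rfl

/-- Polar coordinates on the open upper half-plane. -/
theorem lintegral_upperHalfPlane_polar {f : ℝ → ℝ → ℝ≥0∞} (hf : Measurable f.uncurry) :
    ∫⁻ x, ∫⁻ y in Set.Ioi (0 : ℝ), f x y =
      ∫⁻ r in Set.Ioi (0 : ℝ), ∫⁻ θ in Set.Ioo 0 Real.pi,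
        ENNReal.ofReal r * f (r * Real.cos θ) (r * Real.sin θ) := by
  have hS : MeasurableSet {p : ℝ × ℝ | 0 < p.2} := measurableSet_lt (by fun_prop) (by fun_prop)
  calc ∫⁻ x, ∫⁻ y in Set.Ioi (0 : ℝ), f x y
      = ∫⁻ x, ∫⁻ y, {p : ℝ × ℝ | 0 < p.2}.indicator f.uncurry (x, y) := by
        refine lintegral_congr fun x ↦ ?_
        rw [← lintegral_indicator measurableSet_Ioi]
        rfl
    _ = ∫⁻ p : ℝ × ℝ, {p : ℝ × ℝ | 0 < p.2}.indicator f.uncurry p := by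
        rw [Measure.volume_eq_prod, lintegral_prod _ (hf.indicator hS).aemeasurable]
    _ = ∫⁻ r in Set.Ioi (0 : ℝ), ∫⁻ θ in Set.Ioo (-Real.pi) Real.pi, ENNReal.ofReal r *
          {p : ℝ × ℝ | 0 < p.2}.indicator f.uncurry (r * Real.cos θ, r * Real.sin θ) := by
        rw [← lintegral_comp_polarCoord_symm, polarCoord_target, Measure.volume_eq_prod,
          ← Measure.prod_restrict, lintegral_prod]
        · simp only [polarCoord_symm_apply, smul_eq_mul]
        · simp only [polarCoord_symm_apply, smul_eq_mul]
          have h := hf.indicator hS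
          have h2 : Measurable fun p : ℝ × ℝ ↦ (p.1 * Real.cos p.2, p.1 * Real.sin p.2) := by
            fun_prop
          exact (Measurable.mul (by fun_prop) (h.comp h2)).aemeasurable
    _ = _ := by
        refine setLIntegral_congr_fun measurableSet_Ioi fun r (hr : 0 < r) ↦ ?_
        have hsub : Set.Ioo 0 Real.pi ⊆ Set.Ioo (-Real.pi) Real.pi :=
          Set.Ioo_subset_Ioo_left (by linarith [Real.pi_pos])
        rw [← Set.inter_eq_left.2 hsub, ← setLIntegral_indicator measurableSet_Ioo]
        refine setLIntegral_congr_fun measurableSet_Ioo fun θ hθ ↦ ?_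
        by_cases h0 : 0 < θ
        · have hs : 0 < r * Real.sin θ := mul_pos hr (Real.sin_pos_of_pos_of_lt_pi h0 hθ.2)
          rw [Set.indicator_of_mem (by exact hs),
            Set.indicator_of_mem (s := Set.Ioo 0 Real.pi) ⟨h0, hθ.2⟩]
          rfl
        · have hs : ¬ 0 < r * Real.sin θ := not_lt.2 <| mul_nonpos_of_nonneg_of_nonpos hr.le
            (Real.sin_nonpos_of_nonpos_of_neg_pi_le (not_lt.1 h0) hθ.1.le)
          rw [Set.indicator_of_notMem (by exact hs), mul_zero,
            Set.indicator_of_notMem (s := Set.Ioo 0 Real.pi) (fun h ↦ h0 h.1)]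

/-- Fubini along an orthogonal decomposition, for functions of the projection to `U` and the
distance from `U`. -/
theorem lintegral_orthogonalDecomposition {E : Type*} [NormedAddCommGroup E]
    [InnerProductSpace ℝ E] [FiniteDimensional ℝ E] [MeasurableSpace E] [BorelSpace E]
    (U : Submodule ℝ E) [Nontrivial Uᗮ] {f : U → ℝ → ℝ≥0∞} (hf : Measurable f.uncurry) :
    ∫⁻ x : E, f (U.orthogonalProjectionOnto x) ‖Uᗮ.orthogonalProjectionOnto x‖ =
      (volume : Measure Uᗮ).toSphere Set.univ * ∫⁻ u : U, ∫⁻ s in Set.Ioi (0 : ℝ),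
        ENNReal.ofReal (s ^ (Module.finrank ℝ Uᗮ - 1)) * f u s := by
  have hpres := (WithLp.volume_preserving_ofLp U Uᗮ).comp
    U.orthogonalDecomposition.measurePreserving
  have hmeas : Measurable fun p : U × Uᗮ ↦ f p.1 ‖p.2‖ :=
    hf.comp (by fun_prop : Measurable fun p : U × Uᗮ ↦ (p.1, ‖p.2‖))
  calc ∫⁻ x : E, f (U.orthogonalProjectionOnto x) ‖Uᗮ.orthogonalProjectionOnto x‖
      = ∫⁻ p : U × Uᗮ, f p.1 ‖p.2‖ := by
        rw [← hpres.lintegral_comp hmeas]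
        simp
    _ = ∫⁻ u : U, ∫⁻ v : Uᗮ, f u ‖v‖ := by
        rw [Measure.volume_eq_prod, lintegral_prod _ hmeas.aemeasurable]
    _ = _ := by
        rw [← lintegral_const_mul]
        · refine lintegral_congr fun u ↦ ?_
          exact lintegral_fun_norm_addHaar volume (f := f u) (hf.comp measurable_prodMk_left)
        · exact Measurable.lintegral_prod_right' (ν := volume.restrict (Set.Ioi (0 : ℝ)))
            (f := fun p : U × ℝ ↦
              ENNReal.ofReal (p.2 ^ (Module.finrank ℝ Uᗮ - 1)) * f p.1 p.2)
            (Measurable.mul (by fun_prop) hf)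

/-- Polar coordinates around a unit vector `c`, with polar angle `θ` measured from `c`. -/
theorem lintegral_inner_norm {E : Type*} [NormedAddCommGroup E]
    [InnerProductSpace ℝ E] [FiniteDimensional ℝ E] [MeasurableSpace E] [BorelSpace E]
    {c : E} (hc : ‖c‖ = 1) [Nontrivial (ℝ ∙ c)ᗮ]
    {g : ℝ → ℝ → ℝ≥0∞} (hg : Measurable g.uncurry) :
    ∫⁻ x : E, g ⟪c, x⟫ ‖x‖ =
      (volume : Measure (ℝ ∙ c)ᗮ).toSphere Set.univ *
        ∫⁻ r in Set.Ioi (0 : ℝ), ∫⁻ θ in Set.Ioo 0 Real.pi, ENNReal.ofReal r *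
          (ENNReal.ofReal ((r * Real.sin θ) ^ (Module.finrank ℝ (ℝ ∙ c)ᗮ - 1)) *
            g (r * Real.cos θ) r) := by
  set n := Module.finrank ℝ (ℝ ∙ c)ᗮ - 1
  have hgm : Measurable fun p : ℝ × ℝ ↦
      ENNReal.ofReal (p.2 ^ n) * g p.1 √(p.1 ^ 2 + p.2 ^ 2) :=
    Measurable.mul (by fun_prop) (hg.comp
      (by fun_prop : Measurable fun p : ℝ × ℝ ↦ (p.1, √(p.1 ^ 2 + p.2 ^ 2))))
  have hinner (x : E) : ⟪c, ((ℝ ∙ c).orthogonalProjectionOnto x : E)⟫ = ⟪c, x⟫ :=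
    Submodule.inner_orthogonalProjectionOnto_eq_of_mem_left
      (⟨c, Submodule.mem_span_singleton_self c⟩ : ℝ ∙ c) x
  have hnorm (x : E) : ‖x‖ = √(‖(ℝ ∙ c).orthogonalProjectionOnto x‖ ^ 2 +
      ‖(ℝ ∙ c)ᗮ.orthogonalProjectionOnto x‖ ^ 2) := by
    rw [← Submodule.norm_sq_eq_add_norm_sq_projection, Real.sqrt_sq (norm_nonneg x)]
  calc ∫⁻ x : E, g ⟪c, x⟫ ‖x‖
      = ∫⁻ x : E, g ⟪c, ((ℝ ∙ c).orthogonalProjectionOnto x : E)⟫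
          √(‖(ℝ ∙ c).orthogonalProjectionOnto x‖ ^ 2 +
            ‖(ℝ ∙ c)ᗮ.orthogonalProjectionOnto x‖ ^ 2) :=
        lintegral_congr fun x ↦ by rw [hinner, ← hnorm]
    _ = (volume : Measure (ℝ ∙ c)ᗮ).toSphere Set.univ *
          ∫⁻ u : (ℝ ∙ c : Submodule ℝ E), ∫⁻ s in Set.Ioi (0 : ℝ), ENNReal.ofReal (s ^ n) *
            g ⟪c, (u : E)⟫ √(‖u‖ ^ 2 + s ^ 2) :=
        lintegral_orthogonalDecomposition (ℝ ∙ c)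
          (f := fun u s ↦ g ⟪c, (u : E)⟫ √(‖u‖ ^ 2 + s ^ 2))
          (hg.comp (by fun_prop : Measurable fun p : (ℝ ∙ c : Submodule ℝ E) × ℝ ↦
            (⟪c, (p.1 : E)⟫, √(‖p.1‖ ^ 2 + p.2 ^ 2))))
    _ = (volume : Measure (ℝ ∙ c)ᗮ).toSphere Set.univ *
          ∫⁻ t : ℝ, ∫⁻ s in Set.Ioi (0 : ℝ), ENNReal.ofReal (s ^ n) *
            g t √(t ^ 2 + s ^ 2) := by
        congr 1
        rw [← (LinearIsometryEquiv.toSpanUnitSingleton c hc).measurePreserving.lintegral_comp_emb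
          (LinearIsometryEquiv.toSpanUnitSingleton c hc).toHomeomorph.measurableEmbedding]
        simp [inner_smul_right, hc, norm_smul]
    _ = _ := by
        rw [lintegral_upperHalfPlane_polar
          (f := fun t s ↦ ENNReal.ofReal (s ^ n) * g t √(t ^ 2 + s ^ 2)) hgm]
        congr 1
        refine setLIntegral_congr_fun measurableSet_Ioi fun r (hr : 0 < r) ↦ ?_
        have h (θ : ℝ) : √((r * Real.cos θ) ^ 2 + (r * Real.sin θ) ^ 2) = r := by
          rw [mul_pow, mul_pow, ← mul_add, Real.cos_sq_add_sin_sq, mul_one, Real.sqrt_sq hr.le]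
        simp only [h]

theorem lintegral_cos_mul_sin_pow {α : ℝ} (hα₀ : 0 ≤ α) (hα : α ≤ Real.pi / 2) (k : ℕ) :
    ∫⁻ θ in Set.Ioc 0 α, ENNReal.ofReal (Real.cos θ * Real.sin θ ^ k) =
      ENNReal.ofReal (Real.sin α ^ (k + 1) / (k + 1)) := by
  rw [← ofReal_integral_eq_lintegral_ofReal, ← intervalIntegral.integral_of_le hα₀]
  · congr 1
    have h (x : ℝ) : HasDerivAt (fun θ ↦ Real.sin θ ^ (k + 1) / (k + 1))
        (Real.cos x * Real.sin x ^ k) x := by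
      refine (((Real.hasDerivAt_sin x).fun_pow (k + 1)).div_const ((k : ℝ) + 1)).congr_deriv ?_
      have : (k : ℝ) + 1 ≠ 0 := by positivity
      push_cast
      field_simp
    rw [intervalIntegral.integral_eq_sub_of_hasDerivAt (fun x _ ↦ h x)
      (Continuous.intervalIntegrable (by fun_prop) _ _)]
    simp
  · exact (Continuous.intervalIntegrable (by fun_prop) 0 α).1
  · filter_upwards [ae_restrict_mem measurableSet_Ioc] with θ hθ
    have := Real.cos_nonneg_of_neg_pi_div_two_le_of_le (x := θ) (by linarith [hθ.1, Real.pi_pos])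
      (hθ.2.trans hα)
    have := Real.sin_nonneg_of_nonneg_of_le_pi hθ.1.le (by linarith [hθ.2, Real.pi_pos])
    simp only [Pi.zero_apply]
    positivity

theorem lintegral_sin_pow_of_cos_le {ψ : ℝ} (hψ : ψ ∈ Set.Ioo 0 Real.pi) (n : ℕ) :
    ∫⁻ θ in Set.Ioo 0 Real.pi, ENNReal.ofReal (Real.sin θ ^ n) *
        {θ | Real.cos ψ ≤ Real.cos θ}.indicator 1 θ =
      ENNReal.ofReal (∫ θ in (0 : ℝ)..ψ, Real.sin θ ^ n) := by
  have hm : MeasurableSet {θ | Real.cos ψ ≤ Real.cos θ} :=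
    measurableSet_le (by fun_prop) (by fun_prop)
  have hset : {θ | Real.cos ψ ≤ Real.cos θ} ∩ Set.Ioo 0 Real.pi = Set.Ioc 0 ψ := by
    ext θ
    constructor
    · rintro ⟨h, h0, hp⟩
      exact ⟨h0, (Real.strictAntiOn_cos.le_iff_ge ⟨hψ.1.le, hψ.2.le⟩ ⟨h0.le, hp.le⟩).1 h⟩
    · rintro ⟨h0, h⟩
      have hp := h.trans_lt hψ.2
      exact ⟨(Real.strictAntiOn_cos.le_iff_ge ⟨hψ.1.le, hψ.2.le⟩ ⟨h0.le, hp.le⟩).2 h, h0, hp⟩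
  have hind (θ : ℝ) : ENNReal.ofReal (Real.sin θ ^ n) *
      {θ | Real.cos ψ ≤ Real.cos θ}.indicator 1 θ =
      {θ | Real.cos ψ ≤ Real.cos θ}.indicator (fun θ ↦ ENNReal.ofReal (Real.sin θ ^ n)) θ := by
    simp [Set.indicator_apply]
  simp only [hind]
  rw [setLIntegral_indicator hm, hset, intervalIntegral.integral_of_le hψ.1.le,
    ofReal_integral_eq_lintegral_ofReal]
  · exact (Continuous.intervalIntegrable (by fun_prop) 0 ψ).1
  · filter_upwards [ae_restrict_mem measurableSet_Ioc] with θ hθ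
    exact pow_nonneg (Real.sin_nonneg_of_nonneg_of_le_pi hθ.1.le (hθ.2.trans hψ.2.le)) n

theorem measurableSet_planeSector (ε : ℝ) :
    MeasurableSet {p : ℝ × ℝ | p.2 ≤ ε * √(p.1 ^ 2 + p.2 ^ 2) ∧ p.1 ^ 2 + p.2 ^ 2 < 1} := by
  refine MeasurableSet.inter (s₁ := {p : ℝ × ℝ | p.2 ≤ ε * √(p.1 ^ 2 + p.2 ^ 2)})
    (s₂ := {p : ℝ × ℝ | p.1 ^ 2 + p.2 ^ 2 < 1}) (measurableSet_le ?_ ?_)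
    (measurableSet_lt ?_ ?_) <;> fun_prop

theorem lintegral_pow_mul_pow_sector_le {a k : ℕ} (ha : 1 ≤ a) {ε : ℝ}
    (hε : ε ∈ Set.Icc (0 : ℝ) 1) :
    ∫⁻ x in Set.Ioi (0 : ℝ), ∫⁻ y in Set.Ioi (0 : ℝ),
      ENNReal.ofReal (x ^ a) * (ENNReal.ofReal (y ^ k) *
        {p : ℝ × ℝ | p.2 ≤ ε * √(p.1 ^ 2 + p.2 ^ 2) ∧ p.1 ^ 2 + p.2 ^ 2 < 1}.indicator 1 (x, y)) ≤
      ENNReal.ofReal (1 / (a + k + 2)) * ENNReal.ofReal (ε ^ (k + 1) / (k + 1)) := by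
  set S := {p : ℝ × ℝ | p.2 ≤ ε * √(p.1 ^ 2 + p.2 ^ 2) ∧ p.1 ^ 2 + p.2 ^ 2 < 1} with hS
  have hSm : MeasurableSet S := measurableSet_planeSector ε
  have hT : MeasurableSet {p : ℝ × ℝ | 0 < p.1} := measurableSet_lt (by fun_prop) (by fun_prop)
  have hαp : Real.arcsin ε ≤ Real.pi / 2 := Real.arcsin_le_pi_div_two ε
  calc _ = ∫⁻ x, ∫⁻ y in Set.Ioi (0 : ℝ), {p : ℝ × ℝ | 0 < p.1}.indicator
            (fun p ↦ ENNReal.ofReal (p.1 ^ a) * (ENNReal.ofReal (p.2 ^ k) *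
              S.indicator 1 p)) (x, y) := by
        rw [← lintegral_indicator measurableSet_Ioi]
        refine lintegral_congr fun x ↦ ?_
        by_cases hx : 0 < x <;> simp [Set.indicator_apply, hx]
    _ = ∫⁻ r in Set.Ioi (0 : ℝ), ∫⁻ θ in Set.Ioo 0 Real.pi, ENNReal.ofReal r *
          {p : ℝ × ℝ | 0 < p.1}.indicator
            (fun p ↦ ENNReal.ofReal (p.1 ^ a) * (ENNReal.ofReal (p.2 ^ k) *
              S.indicator 1 p)) (r * Real.cos θ, r * Real.sin θ) := by
        refine lintegral_upperHalfPlane_polar (f := fun x y ↦ {p : ℝ × ℝ | 0 < p.1}.indicator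
            (fun p ↦ ENNReal.ofReal (p.1 ^ a) * (ENNReal.ofReal (p.2 ^ k) *
              S.indicator 1 p)) (x, y)) (Measurable.indicator ?_ hT)
        exact Measurable.mul (by fun_prop)
          (Measurable.mul (by fun_prop) (measurable_one.indicator hSm))
    _ ≤ ∫⁻ r in Set.Ioi (0 : ℝ), ∫⁻ θ in Set.Ioo 0 Real.pi,
          (Set.Iio 1).indicator (fun r ↦ ENNReal.ofReal (r ^ (a + k + 1))) r *
            (Set.Ioc 0 (Real.arcsin ε)).indicator
              (fun θ ↦ ENNReal.ofReal (Real.cos θ * Real.sin θ ^ k)) θ := by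
        refine setLIntegral_mono' measurableSet_Ioi fun r (hr : 0 < r) ↦
          setLIntegral_mono' measurableSet_Ioo fun θ hθ ↦ ?_
        by_cases hmem : 0 < r * Real.cos θ ∧ (r * Real.cos θ, r * Real.sin θ) ∈ S
        · obtain ⟨hx, hxS⟩ := hmem
          have hcos : 0 < Real.cos θ := pos_of_mul_pos_right hx hr.le
          have hsin : 0 < Real.sin θ := Real.sin_pos_of_pos_of_lt_pi hθ.1 hθ.2
          have hsq : (r * Real.cos θ) ^ 2 + (r * Real.sin θ) ^ 2 = r ^ 2 := by
            rw [mul_pow, mul_pow, ← mul_add, Real.cos_sq_add_sin_sq, mul_one]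
          simp only [hS, Set.mem_ofPred_eq, hsq, Real.sqrt_sq hr.le] at hxS
          have hr1 : r < 1 := by nlinarith [hxS.2]
          have hsε : Real.sin θ ≤ ε := by nlinarith [hxS.1]
          have hθ2 : θ ≤ Real.pi / 2 := by
            by_contra! h
            exact hcos.not_ge (Real.cos_nonpos_of_pi_div_two_le_of_le h.le
              (by linarith [hθ.2, Real.pi_pos]))
          have hθα : θ ≤ Real.arcsin ε := by
            rw [Real.le_arcsin_iff_sin_le ⟨by linarith [hθ.1, Real.pi_pos], hθ2⟩
              ⟨by linarith [hε.1], hε.2⟩]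
            exact hsε
          rw [Set.indicator_of_mem (by exact hx),
            Set.indicator_of_mem (s := Set.Iio 1) (by exact hr1),
            Set.indicator_of_mem (s := Set.Ioc 0 (Real.arcsin ε)) ⟨hθ.1, hθα⟩,
            ← ENNReal.ofReal_mul (by positivity)]
          have h1 : S.indicator (1 : ℝ × ℝ → ℝ≥0∞) (r * Real.cos θ, r * Real.sin θ) ≤ 1 :=
            Set.indicator_le_self' (by simp) _
          grw [h1]
          rw [mul_one, ← ENNReal.ofReal_mul (by positivity), ← ENNReal.ofReal_mul hr.le]
          refine ENNReal.ofReal_le_ofReal ?_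
          have hpow : Real.cos θ ^ a ≤ Real.cos θ :=
            pow_le_of_le_one hcos.le (Real.cos_le_one θ) (by omega)
          calc r * ((r * Real.cos θ) ^ a * (r * Real.sin θ) ^ k)
              = r ^ (a + k + 1) * (Real.cos θ ^ a * Real.sin θ ^ k) := by ring
            _ ≤ _ := by gcongr
        · refine le_of_eq_of_le ?_ zero_le
          by_cases hx : 0 < r * Real.cos θ
          · have hxS : (r * Real.cos θ, r * Real.sin θ) ∉ S := fun h ↦ hmem ⟨hx, h⟩
            simp [Set.indicator_of_notMem hxS]
          · rw [Set.indicator_of_notMem (by exact hx), mul_zero]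
    _ = (∫⁻ r in Set.Ioi (0 : ℝ),
          (Set.Iio 1).indicator (fun r ↦ ENNReal.ofReal (r ^ (a + k + 1))) r) *
        ∫⁻ θ in Set.Ioo 0 Real.pi, (Set.Ioc 0 (Real.arcsin ε)).indicator
              (fun θ ↦ ENNReal.ofReal (Real.cos θ * Real.sin θ ^ k)) θ := by
        rw [← lintegral_mul_const _ (Measurable.indicator (by fun_prop) measurableSet_Iio)]
        refine lintegral_congr fun r ↦ ?_
        rw [lintegral_const_mul _ (Measurable.indicator (by fun_prop) measurableSet_Ioc)]
    _ ≤ _ := by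
        gcongr
        · rw [setLIntegral_indicator measurableSet_Iio, Set.Iio_inter_Ioi,
            Measure.restrict_congr_set Ioo_ae_eq_Ioc, ← ofReal_integral_eq_lintegral_ofReal,
            ← intervalIntegral.integral_of_le zero_le_one, integral_pow]
          · refine ENNReal.ofReal_le_ofReal (le_of_eq ?_)
            push_cast
            simp
            ring
          · exact (Continuous.intervalIntegrable (by fun_prop) 0 1).1
          · filter_upwards [ae_restrict_mem measurableSet_Ioc] with y hy
            exact pow_nonneg hy.1.le _
        · rw [setLIntegral_indicator measurableSet_Ioc]
          refine (lintegral_mono_set Set.inter_subset_left).trans ?_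
          rw [lintegral_cos_mul_sin_pow (Real.arcsin_nonneg.2 hε.1) hαp,
            Real.sin_arcsin (by linarith [hε.1]) hε.2]

theorem toSphere_univ_eq_ofReal (E : Type*) [NormedAddCommGroup E] [InnerProductSpace ℝ E]
    [FiniteDimensional ℝ E] [MeasurableSpace E] [BorelSpace E] [Nontrivial E] :
    (volume : Measure E).toSphere Set.univ =
      ENNReal.ofReal (Module.finrank ℝ E * (√Real.pi ^ Module.finrank ℝ E /
        Real.Gamma (Module.finrank ℝ E / 2 + 1))) := by
  rw [Measure.toSphere_apply_univ, InnerProductSpace.volume_ball, ENNReal.ofReal_one, one_pow,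
    one_mul, ENNReal.ofReal_mul (Nat.cast_nonneg _), ENNReal.ofReal_natCast]

/-- Volume bound for the points of the unit ball whose projection to `U` makes an angle at most
`ψ` with `c` and whose distance from `U` is at most an `ε`-fraction of their norm. -/
theorem volume_sphericalSector_le {E : Type*} [NormedAddCommGroup E]
    [InnerProductSpace ℝ E] [FiniteDimensional ℝ E] [MeasurableSpace E] [BorelSpace E]
    (U : Submodule ℝ E) {c : U} (hc : ‖c‖ = 1) [Nontrivial Uᗮ] [Nontrivial (ℝ ∙ c)ᗮ] {m k : ℕ}
    (hm : Module.finrank ℝ (ℝ ∙ c)ᗮ = m + 1) (hk : Module.finrank ℝ Uᗮ = k + 1)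
    {ψ : ℝ} (hψ : ψ ∈ Set.Ioo 0 Real.pi) {ε : ℝ} (hε : ε ∈ Set.Icc (0 : ℝ) 1) :
    volume {x : E | ‖U.orthogonalProjectionOnto x‖ * Real.cos ψ ≤
          ⟪c, U.orthogonalProjectionOnto x⟫ ∧
        ‖Uᗮ.orthogonalProjectionOnto x‖ ≤ ε * ‖x‖ ∧ ‖x‖ < 1} ≤
      ENNReal.ofReal ((k + 1 : ℕ) * (√Real.pi ^ (k + 1) / Real.Gamma ((k + 1 : ℕ) / 2 + 1)) *
        ((m + 1 : ℕ) * (√Real.pi ^ (m + 1) / Real.Gamma ((m + 1 : ℕ) / 2 + 1)) *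
          (1 / (m + k + 3) * (ε ^ (k + 1) / (k + 1)) * ∫ θ in (0 : ℝ)..ψ, Real.sin θ ^ m))) := by
  set S := {p : ℝ × ℝ | p.2 ≤ ε * √(p.1 ^ 2 + p.2 ^ 2) ∧ p.1 ^ 2 + p.2 ^ 2 < 1} with hS
  have hSm : MeasurableSet S := measurableSet_planeSector ε
  set T := {p : ℝ × ℝ | p.2 * Real.cos ψ ≤ p.1} with hT
  have hTm : MeasurableSet T := measurableSet_le (by fun_prop) (by fun_prop)
  have hSi : Measurable (S.indicator (1 : ℝ × ℝ → ℝ≥0∞)) := measurable_one.indicator hSm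
  have hTi : Measurable (T.indicator (1 : ℝ × ℝ → ℝ≥0∞)) := measurable_one.indicator hTm
  set W : ℝ → ℝ≥0∞ := fun r ↦ ∫⁻ s in Set.Ioi (0 : ℝ), ENNReal.ofReal (s ^ k) *
    S.indicator 1 (r, s) with hW
  have hWm : Measurable W :=
    Measurable.lintegral_prod_right' (ν := volume.restrict (Set.Ioi (0 : ℝ)))
      (f := fun p : ℝ × ℝ ↦ ENNReal.ofReal (p.2 ^ k) * S.indicator 1 p)
      (Measurable.mul (by fun_prop) hSi)
  have hnorm (x : E) : ‖U.orthogonalProjectionOnto x‖ ^ 2 + ‖Uᗮ.orthogonalProjectionOnto x‖ ^ 2 =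
      ‖x‖ ^ 2 := (Submodule.norm_sq_eq_add_norm_sq_projection x U).symm
  have hA : MeasurableSet {x : E | ‖U.orthogonalProjectionOnto x‖ * Real.cos ψ ≤
      ⟪c, U.orthogonalProjectionOnto x⟫ ∧
        ‖Uᗮ.orthogonalProjectionOnto x‖ ≤ ε * ‖x‖ ∧ ‖x‖ < 1} := by
    have h1 : MeasurableSet {x : E | ‖U.orthogonalProjectionOnto x‖ * Real.cos ψ ≤
        ⟪c, U.orthogonalProjectionOnto x⟫} := measurableSet_le (by fun_prop) (by fun_prop)
    have h2 : MeasurableSet {x : E | ‖Uᗮ.orthogonalProjectionOnto x‖ ≤ ε * ‖x‖} :=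
      measurableSet_le (by fun_prop) (by fun_prop)
    exact h1.inter (h2.inter (measurableSet_lt measurable_norm measurable_const))
  calc _ ≤ ∫⁻ x : E, T.indicator 1 (⟪c, U.orthogonalProjectionOnto x⟫,
            ‖U.orthogonalProjectionOnto x‖) *
          S.indicator 1 (‖U.orthogonalProjectionOnto x‖, ‖Uᗮ.orthogonalProjectionOnto x‖) := by
        rw [← lintegral_indicator_one hA]
        refine lintegral_mono (Set.indicator_le fun x hx ↦ ?_)
        obtain ⟨h1, h2, h3⟩ := hx
        rw [Set.indicator_of_mem (by exact h1), Set.indicator_of_mem]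
        · simp
        · simp only [hS, Set.mem_ofPred_eq, hnorm, Real.sqrt_sq (norm_nonneg x)]
          exact ⟨h2, by nlinarith [norm_nonneg x]⟩
    _ = (volume : Measure Uᗮ).toSphere Set.univ * ∫⁻ u : U, ∫⁻ s in Set.Ioi (0 : ℝ),
          ENNReal.ofReal (s ^ k) * (T.indicator 1 (⟪c, u⟫, ‖u‖) * S.indicator 1 (‖u‖, s)) := by
        rw [lintegral_orthogonalDecomposition U
          (f := fun u s ↦ T.indicator 1 (⟪c, u⟫, ‖u‖) * S.indicator 1 (‖u‖, s)), hk,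
          Nat.add_sub_cancel]
        exact Measurable.mul
          (hTi.comp (by fun_prop : Measurable fun p : U × ℝ ↦ (⟪c, p.1⟫, ‖p.1‖)))
          (hSi.comp (by fun_prop : Measurable fun p : U × ℝ ↦ (‖p.1‖, p.2)))
    _ = (volume : Measure Uᗮ).toSphere Set.univ * ∫⁻ u : U,
          T.indicator 1 (⟪c, u⟫, ‖u‖) * W ‖u‖ := by
        congr 1
        refine lintegral_congr fun u ↦ ?_
        rw [hW, ← lintegral_const_mul]
        · exact lintegral_congr fun s ↦ mul_left_comm _ _ _
        · exact Measurable.mul (by fun_prop) (hSi.comp measurable_prodMk_left)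
    _ = (volume : Measure Uᗮ).toSphere Set.univ *
        ((volume : Measure (ℝ ∙ c)ᗮ).toSphere Set.univ *
          ∫⁻ r in Set.Ioi (0 : ℝ), ∫⁻ θ in Set.Ioo 0 Real.pi, ENNReal.ofReal r *
            (ENNReal.ofReal ((r * Real.sin θ) ^ m) *
              (T.indicator 1 (r * Real.cos θ, r) * W r))) := by
        rw [lintegral_inner_norm hc (g := fun t r ↦ T.indicator 1 (t, r) * W r), hm,
          Nat.add_sub_cancel]
        exact Measurable.mul hTi (hWm.comp measurable_snd)
    _ = (volume : Measure Uᗮ).toSphere Set.univ *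
        ((volume : Measure (ℝ ∙ c)ᗮ).toSphere Set.univ *
          ((∫⁻ r in Set.Ioi (0 : ℝ), ENNReal.ofReal (r ^ (m + 1)) * W r) *
            ENNReal.ofReal (∫ θ in (0 : ℝ)..ψ, Real.sin θ ^ m))) := by
        congr 2
        rw [← lintegral_mul_const _ (by fun_prop)]
        refine setLIntegral_congr_fun measurableSet_Ioi fun r (hr : 0 < r) ↦ ?_
        rw [← lintegral_sin_pow_of_cos_le hψ, ← lintegral_const_mul]
        · refine lintegral_congr fun θ ↦ ?_
          have hind : T.indicator (1 : ℝ × ℝ → ℝ≥0∞) (r * Real.cos θ, r) =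
              {θ | Real.cos ψ ≤ Real.cos θ}.indicator 1 θ := by
            simp [Set.indicator_apply, hT, hr]
          rw [hind, mul_pow, pow_succ' r m, ENNReal.ofReal_mul (by positivity),
            ENNReal.ofReal_mul hr.le]
          ring
        · exact Measurable.mul (by fun_prop) (measurable_one.indicator
            (measurableSet_le (by fun_prop) (by fun_prop)))
    _ ≤ (volume : Measure Uᗮ).toSphere Set.univ *
        ((volume : Measure (ℝ ∙ c)ᗮ).toSphere Set.univ *
          (ENNReal.ofReal (1 / (m + k + 3)) * ENNReal.ofReal (ε ^ (k + 1) / (k + 1)) *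
            ENNReal.ofReal (∫ θ in (0 : ℝ)..ψ, Real.sin θ ^ m))) := by
        gcongr
        have h := lintegral_pow_mul_pow_sector_le (a := m + 1) (k := k) (by omega) hε
        refine le_trans (le_of_eq ?_) (h.trans (le_of_eq ?_))
        · refine lintegral_congr fun r ↦ ?_
          rw [hW, ← lintegral_const_mul]
          exact Measurable.mul (by fun_prop) (hSi.comp measurable_prodMk_left)
        · push_cast
          ring_nf
    _ = _ := by
        have h1 := Real.Gamma_pos_of_pos (s := ((k + 1 : ℕ) : ℝ) / 2 + 1) (by positivity)
        have h2 := Real.Gamma_pos_of_pos (s := ((m + 1 : ℕ) : ℝ) / 2 + 1) (by positivity)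
        have h3 := hε.1
        rw [toSphere_univ_eq_ofReal, toSphere_univ_eq_ofReal, hk, hm,
          ← ENNReal.ofReal_mul (by positivity), ← ENNReal.ofReal_mul (by positivity),
          ← ENNReal.ofReal_mul (by positivity), ← ENNReal.ofReal_mul (by positivity)]

theorem sphMu_le_of_isClosed {D : ℕ} (hD : 0 < D) {A K B : Set (EuclideanSpace ℝ (Fin D))}
    (hAK : A ⊆ K) (hK : IsClosed K)
    (hB : ∀ x ∈ K, ∀ r ∈ Set.Ioo (0 : ℝ) 1, ‖x‖ = 1 → r • x ∈ B) (hBfin : volume B ≠ ∞) :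
    sphMu D A ≤ (volume B).toReal * (Real.Gamma (D / 2 + 1) / √Real.pi ^ D) := by
  have hne : Nonempty (Fin D) := ⟨⟨0, hD⟩⟩
  have hvol := EuclideanSpace.volume_ball (Fin D) 0 1
  have hpos : 0 < √Real.pi ^ D / Real.Gamma (D / 2 + 1) := by
    have := Real.Gamma_pos_of_pos (s := (D : ℝ) / 2 + 1) (by positivity)
    positivity
  simp only [ENNReal.ofReal_one, one_pow, one_mul, Fintype.card_fin] at hvol
  have hle : (volume : Measure (EuclideanSpace ℝ (Fin D))).toSphere ((↑) ⁻¹' A) ≤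
      D * volume B := by
    refine (measure_mono (Set.preimage_mono hAK)).trans ?_
    rw [Measure.toSphere_apply' _ (hK.preimage continuous_subtype_val).measurableSet,
      finrank_euclideanSpace_fin]
    gcongr
    rintro _ ⟨r, hr, _, ⟨x, hx, rfl⟩, rfl⟩
    exact hB x hx r hr (by simp)
  rw [sphMu, sphericalMeasure, Measure.smul_apply, Measure.toSphere_apply_univ, hvol,
    finrank_euclideanSpace_fin, smul_eq_mul]
  calc _ ≤ (((D : ℝ≥0∞) * ENNReal.ofReal (√Real.pi ^ D / Real.Gamma (D / 2 + 1)))⁻¹ *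
        (D * volume B)).toReal := by
        refine ENNReal.toReal_mono (ENNReal.mul_ne_top (ENNReal.inv_ne_top.2 ?_)
          (ENNReal.mul_ne_top (by simp) hBfin)) (by gcongr)
        exact mul_ne_zero (by simpa using hD.ne') (by simpa using hpos)
    _ = _ := by
        rw [ENNReal.toReal_mul, ENNReal.toReal_inv, ENNReal.toReal_mul, ENNReal.toReal_mul,
          ENNReal.toReal_ofReal hpos.le, ENNReal.toReal_natCast]
        have : (D : ℝ) ≠ 0 := by exact_mod_cast hD.ne'
        have := (Real.Gamma_pos_of_pos (s := (D : ℝ) / 2 + 1) (by positivity)).ne'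
        field_simp

theorem Gamma_le_sqrt_pi_mul_Gamma_add_half {x : ℝ} (hx : 1 ≤ x) :
    Real.Gamma x ≤ √Real.pi * Real.Gamma (x + 1 / 2) := by
  have hpos : 0 < Real.Gamma (x + 1 / 2) := Real.Gamma_pos_of_pos (by linarith)
  have hpos' : 0 < Real.Gamma (x - 1 / 2) := Real.Gamma_pos_of_pos (by linarith)
  have hle : Real.Gamma (x - 1 / 2) ≤ Real.pi * Real.Gamma (x + 1 / 2) := by
    rw [show x + 1 / 2 = x - 1 / 2 + 1 by ring, Real.Gamma_add_one (by linarith)]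
    have : 1 ≤ Real.pi * (x - 1 / 2) := by nlinarith [Real.pi_gt_three]
    nlinarith
  have h := Real.Gamma_mul_add_mul_le_rpow_Gamma_mul_rpow_Gamma (s := x - 1 / 2) (t := x + 1 / 2)
    (a := 1 / 2) (b := 1 / 2) (by linarith) (by linarith) (by norm_num) (by norm_num) (by norm_num)
  rw [show 1 / 2 * (x - 1 / 2) + 1 / 2 * (x + 1 / 2) = x by ring, ← Real.sqrt_eq_rpow,
    ← Real.sqrt_eq_rpow] at h
  calc Real.Gamma x ≤ _ := h
    _ ≤ √(Real.pi * Real.Gamma (x + 1 / 2)) * √(Real.Gamma (x + 1 / 2)) := by gcongr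
    _ = √Real.pi * Real.Gamma (x + 1 / 2) := by
        rw [Real.sqrt_mul Real.pi_pos.le, mul_assoc, Real.mul_self_sqrt hpos.le]

/-- **Hyperspherical-coordinates upper bound on `μ(C^ε)` (Proposition 2).** Let `2 ≤ d < D`
and let `C ⊆ ℝ^D` be a `d`-dimensional convex cone contained in a `d`-dimensional spherical
cone `P^d[c,ψ]` for a unit vector `c` and `ψ ∈ (0,π/2)`. Then for every `ε ∈ (0,1)`,
`μ(C^ε) ≤ (Γ(D/2)/(Γ((D−d+1)/2)·Γ((d−1)/2))) · ε^{D−d} · ∫₀^ψ sin^{d−2} x dx`. -/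
theorem stmt_11 (D d : ℕ) (hd : 2 ≤ d) (hdD : d < D)
    (C : ConvexCone ℝ (EuclideanSpace ℝ (Fin D)))
    (hCdim : Module.finrank ℝ
      (Submodule.span ℝ (C : Set (EuclideanSpace ℝ (Fin D)))) = d)
    (U : Submodule ℝ (EuclideanSpace ℝ (Fin D))) (hUdim : Module.finrank ℝ U = d)
    (c : EuclideanSpace ℝ (Fin D)) (hcU : c ∈ U) (hc : ‖c‖ = 1)
    (ψ : ℝ) (hψ : ψ ∈ Set.Ioo 0 (Real.pi / 2))
    (hsub : (C : Set (EuclideanSpace ℝ (Fin D))) ⊆ sphericalCone U c ψ)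
    (ε : ℝ) (hε : ε ∈ Set.Ioo (0 : ℝ) 1) :
    sphMu D (approxCone C ε) ≤
      Real.Gamma ((D : ℝ) / 2) /
          (Real.Gamma (((D : ℝ) - d + 1) / 2) * Real.Gamma (((d : ℝ) - 1) / 2)) *
        ε ^ (D - d) * ∫ x in (0 : ℝ)..ψ, Real.sin x ^ (d - 2) := by
  obtain ⟨m, rfl⟩ : ∃ m, d = m + 2 := ⟨d - 2, by omega⟩
  obtain ⟨k, rfl⟩ : ∃ k, D = m + k + 3 := ⟨D - m - 3, by omega⟩
  have hspan : Submodule.span ℝ (C : Set (EuclideanSpace ℝ (Fin (m + k + 3)))) = U :=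
    Submodule.eq_of_le_of_finrank_eq (Submodule.span_le.2 fun x hx ↦ (hsub hx).1)
      (hCdim.trans hUdim.symm)
  have hk : Module.finrank ℝ Uᗮ = k + 1 := by
    have := U.finrank_add_finrank_orthogonal
    rw [finrank_euclideanSpace_fin] at this
    omega
  have hc' : ‖(⟨c, hcU⟩ : U)‖ = 1 := hc
  have hm : Module.finrank ℝ (ℝ ∙ (⟨c, hcU⟩ : U))ᗮ = m + 1 := by
    have := (ℝ ∙ (⟨c, hcU⟩ : U)).finrank_add_finrank_orthogonal
    rw [finrank_span_singleton (fun h ↦ by simp [h] at hc'), hUdim] at this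
    omega
  have : Nontrivial Uᗮ := Module.nontrivial_of_finrank_pos (R := ℝ) (by omega)
  have : Nontrivial (ℝ ∙ (⟨c, hcU⟩ : U))ᗮ := Module.nontrivial_of_finrank_pos (R := ℝ) (by omega)
  have hvol := volume_sphericalSector_le U hc' hm hk (ψ := ψ)
    ⟨hψ.1, by linarith [hψ.2, Real.pi_pos]⟩ (Set.Ioo_subset_Icc_self hε)
  set B := {x : EuclideanSpace ℝ (Fin (m + k + 3)) |
    ‖U.orthogonalProjectionOnto x‖ * Real.cos ψ ≤ ⟪⟨c, hcU⟩, U.orthogonalProjectionOnto x⟫ ∧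
      ‖Uᗮ.orthogonalProjectionOnto x‖ ≤ ε * ‖x‖ ∧ ‖x‖ < 1}
  have h_integral : 0 ≤ ∫ θ in (0 : ℝ)..ψ, Real.sin θ ^ m :=
    intervalIntegral.integral_nonneg hψ.1.le fun θ hθ ↦
      pow_nonneg (Real.sin_nonneg_of_nonneg_of_le_pi hθ.1
        (by linarith [hθ.2, hψ.2, Real.pi_pos])) m
  have hmu := sphMu_le_of_isClosed (A := approxCone C ε) (B := B)
    (K := {x | ‖U.orthogonalProjectionOnto x‖ * Real.cos ψ ≤
      ⟪⟨c, hcU⟩, U.orthogonalProjectionOnto x⟫ ∧ ‖Uᗮ.orthogonalProjectionOnto x‖ ≤ ε * ‖x‖})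
    (by omega) ?_ ?_ ?_ (ne_top_of_le_ne_top ENNReal.ofReal_ne_top hvol)
  · have h1 := Real.Gamma_pos_of_pos (s := ((m : ℝ) + k + 3) / 2) (by positivity)
    have h2 := Real.Gamma_pos_of_pos (s := ((m : ℝ) + 1) / 2) (by positivity)
    have h3 := Real.Gamma_pos_of_pos (s := ((k : ℝ) + 2) / 2) (by positivity)
    have h4 := Real.Gamma_pos_of_pos (s := ((k : ℝ) + 1) / 2 + 1) (by positivity)
    have h5 := Real.Gamma_pos_of_pos (s := ((m : ℝ) + 1) / 2 + 1) (by positivity)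
    have hpi := Real.sqrt_pos.2 Real.pi_pos
    have hε0 := hε.1
    have hvolR := ENNReal.toReal_le_of_le_ofReal (by push_cast; positivity) hvol
    refine (hmu.trans (mul_le_mul_of_nonneg_right hvolR ?_)).trans ?_
    · have := Real.Gamma_pos_of_pos (s := ((m + k + 3 : ℕ) : ℝ) / 2 + 1) (by positivity)
      positivity
    have hD : m + k + 3 - (m + 2) = k + 1 := by omega
    rw [hD, Nat.add_sub_cancel]
    push_cast
    rw [show ((m : ℝ) + k + 3 - (m + 2) + 1) / 2 = (k + 2) / 2 by ring,
      show ((m : ℝ) + 2 - 1) / 2 = (m + 1) / 2 by ring,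
      Real.Gamma_add_one (s := ((m : ℝ) + k + 3) / 2) (by positivity),
      Real.Gamma_add_one (s := ((m : ℝ) + 1) / 2) (by positivity)]
    have hΓ := Gamma_le_sqrt_pi_mul_Gamma_add_half (x := ((k : ℝ) + 2) / 2)
      (by linarith [Nat.cast_nonneg (α := ℝ) k])
    rw [show ((k : ℝ) + 2) / 2 + 1 / 2 = (k + 1) / 2 + 1 by ring] at hΓ
    calc _ = Real.Gamma ((m + k + 3) / 2) /
          (√Real.pi * Real.Gamma ((k + 1) / 2 + 1) * Real.Gamma ((m + 1) / 2)) *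
            ε ^ (k + 1) * ∫ θ in (0 : ℝ)..ψ, Real.sin θ ^ m := by
          field_simp
          ring
      _ ≤ _ := by gcongr
  · rintro w ⟨u, hu, v, hv, rfl, hle⟩
    rw [hspan] at hv
    obtain ⟨huU, huc⟩ := hsub hu
    have hPu : U.orthogonalProjectionOnto (u + v) = ⟨u, huU⟩ := by
      rw [map_add, Submodule.orthogonalProjectionOnto_apply_of_mem_orthogonal hv, add_zero]
      exact U.orthogonalProjectionOnto_mem_subspace_eq_self ⟨u, huU⟩
    have hPv : Uᗮ.orthogonalProjectionOnto (u + v) = ⟨v, hv⟩ := by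
      rw [map_add, Submodule.orthogonalProjectionOnto_apply_of_mem_orthogonal
        (U.le_orthogonal_orthogonal huU), zero_add]
      exact Uᗮ.orthogonalProjectionOnto_mem_subspace_eq_self ⟨v, hv⟩
    rw [Set.mem_ofPred_eq, hPu, hPv]
    exact ⟨huc, hle⟩
  · rw [Set.ofPred_and]
    exact (isClosed_le (by fun_prop) (by fun_prop)).inter
      (isClosed_le (by fun_prop) (by fun_prop))
  · rintro x ⟨h1, h2⟩ r hr hx
    have hr0 := hr.1
    refine ⟨?_, ?_, ?_⟩
    · rw [map_smul, norm_smul, inner_smul_right, Real.norm_of_nonneg hr0.le, mul_assoc]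
      gcongr
    · rw [map_smul, norm_smul, norm_smul, Real.norm_of_nonneg hr0.le, mul_left_comm]
      gcongr
    · rw [norm_smul, hx, Real.norm_of_nonneg hr0.le, mul_one]
      exact hr.2
end
end
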